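/- Let L, U ∈ ℝ^{d×d} be symmetric with L ≤ U entrywise, let d⃗ ∈ ℝ^d have strictly positive entries, and let α ∈ ℝ^d satisfy αᵢ ≥ max{ 0, −½·( Lᵢᵢ − Σ_{j≠i} max{|Lᵢⱼ|, |Uᵢⱼ|}·(d⃗ⱼ/d⃗ᵢ) ) } for every i. Then for every real symmetric matrix H with L ≤ H ≤ U entrywise, the matrix H + 2·diag(α) is positive semidefinite. Consequently, if L and U are entrywise bounds on the Hessian of a twice continuously differentiable g over a box [l,u], the non-uniformly shifted function g_{α}(z) = g(z) + Σ_{i=1}^d αᵢ(z_i − l_i)(z_i − u_i) is convex on [l,u]. -/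

import Mathlib

/-!
The first claim is Gershgorin's criterion after the diagonal scaling by `dv`. With
`mᵢⱼ = max |Lᵢⱼ| |Uᵢⱼ|`, the weighted AM-GM inequality gives, for `i ≠ j`,
`xᵢ Hᵢⱼ xⱼ ≥ -½ mᵢⱼ (xᵢ² dⱼ/dᵢ + xⱼ² dᵢ/dⱼ)`. Since `m` is symmetric, summing these yields
`xᵀHx ≥ ∑ᵢ (Lᵢᵢ - ∑_{j≠i} mᵢⱼ dⱼ/dᵢ) xᵢ² ≥ -2 ∑ᵢ αᵢ xᵢ²` (`scaled_gershgorin`).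

For the second claim, restrict the shifted function to a segment `t ↦ x + t (y - x)` in the box.
Its second derivative is `vᵀ ∇²g v + 2 ∑ᵢ αᵢ vᵢ²` with `v = y - x`, which is nonnegative by the
first claim. Working along segments avoids any assumption on the interior of the box, which is
empty when some `lᵢ = uᵢ`.
-/

/-- The Hessian matrix of `g : ℝ^d → ℝ` at `z`, entry `(i, j)`, expressed via iterated
Fréchet derivatives in the coordinate directions. -/
noncomputable def hessAt {d : ℕ} (g : (Fin d → ℝ) → ℝ) (z : Fin d → ℝ) (i j : Fin d) : ℝ :=
  fderiv ℝ (fun w => fderiv ℝ g w (Pi.single j 1)) z (Pi.single i 1)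

/-- Scaled Gershgorin bound for an interval matrix. -/
lemma scaled_gershgorin {d : ℕ} {L U : Matrix (Fin d) (Fin d) ℝ}
    (hLs : L.IsSymm) (hUs : U.IsSymm)
    {dv : Fin d → ℝ} (hdv : ∀ i, 0 < dv i) {α : Fin d → ℝ}
    (hα : ∀ i,
      max 0 (-(1 / 2) *
        (L i i - ∑ j ∈ Finset.univ.erase i, max |L i j| |U i j| * (dv j / dv i))) ≤ α i)
    (H : Matrix (Fin d) (Fin d) ℝ) (hH : ∀ i j, L i j ≤ H i j ∧ H i j ≤ U i j)
    (x : Fin d → ℝ) :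
    0 ≤ (∑ i, ∑ j, x i * H i j * x j) + 2 * ∑ i, α i * (x i) ^ 2 := by
  -- `∑ j, w i j` is the left end of the `i`-th Gershgorin disc of the scaled matrix.
  let w : Fin d → Fin d → ℝ := fun i j =>
    if j = i then L i i else -(max |L i j| |U i j| * (dv j / dv i))
  have hw : ∀ i, ∑ j, w i j
      = L i i - ∑ j ∈ Finset.univ.erase i, max |L i j| |U i j| * (dv j / dv i) := by
    intro i
    rw [← Finset.add_sum_erase _ _ (Finset.mem_univ i), sub_eq_add_neg, ← Finset.sum_neg_distrib]
    congr 1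
    · simp [w]
    · exact Finset.sum_congr rfl fun j hj => if_neg (Finset.ne_of_mem_erase hj)
  have hpt : ∀ i j, (w i j * x i ^ 2 + w j i * x j ^ 2) / 2 ≤ x i * H i j * x j := by
    intro i j
    by_cases h : j = i
    · subst h
      simp only [w, if_true]
      nlinarith [(hH j j).1, sq_nonneg (x j)]
    · have h' : i ≠ j := fun e => h e.symm
      simp only [w, if_neg h, if_neg h']
      rw [hLs.apply i j, hUs.apply i j]
      set m := max |L i j| |U i j|
      have hm : |H i j| ≤ m := abs_le_max_abs_abs (hH i j).1 (hH i j).2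
      have hm0 : 0 ≤ m := (abs_nonneg _).trans hm
      have h1 : -(m * (|x i| * |x j|)) ≤ x i * H i j * x j := by
        have e : |x i * H i j * x j| = |H i j| * (|x i| * |x j|) := by
          rw [abs_mul, abs_mul]; ring
        have := neg_abs_le (x i * H i j * x j)
        have := mul_le_mul_of_nonneg_right hm (mul_nonneg (abs_nonneg (x i)) (abs_nonneg (x j)))
        linarith
      have h2 : 2 * (|x i| * |x j|) ≤ dv j / dv i * x i ^ 2 + dv i / dv j * x j ^ 2 := by
        have hi := hdv i
        have hj := hdv j
        have e : dv j / dv i * x i ^ 2 + dv i / dv j * x j ^ 2 - 2 * (|x i| * |x j|)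
            = (dv j * |x i| - dv i * |x j|) ^ 2 / (dv i * dv j) := by
          rw [← sq_abs (x i), ← sq_abs (x j)]
          field_simp
          ring
        have : 0 ≤ (dv j * |x i| - dv i * |x j|) ^ 2 / (dv i * dv j) := by positivity
        linarith
      have := mul_le_mul_of_nonneg_left h2 hm0
      linarith
  have hsum : ∑ i, (∑ j, w i j) * x i ^ 2 ≤ ∑ i, ∑ j, x i * H i j * x j := by
    calc ∑ i, (∑ j, w i j) * x i ^ 2
        = ∑ i, ∑ j, (w i j * x i ^ 2 + w j i * x j ^ 2) / 2 := by
          have e : ∑ i, ∑ j, w j i * x j ^ 2 = ∑ i, ∑ j, w i j * x i ^ 2 := Finset.sum_comm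
          simp_rw [← Finset.sum_div, Finset.sum_add_distrib]
          rw [e]
          simp_rw [Finset.sum_mul]
          ring
      _ ≤ _ := Finset.sum_le_sum fun i _ => Finset.sum_le_sum fun j _ => hpt i j
  have hfin : 0 ≤ ∑ i, ((∑ j, w i j) * x i ^ 2 + 2 * (α i * x i ^ 2)) := by
    refine Finset.sum_nonneg fun i _ => ?_
    have := (le_max_right _ _).trans (hα i)
    rw [← hw i] at this
    nlinarith [sq_nonneg (x i)]
  rw [Finset.sum_add_distrib, ← Finset.mul_sum] at hfin
  linarith

/-- The second Fréchet derivative, evaluated twice at `v`, is the quadratic form of `hessAt`. -/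
lemma fderiv_fderiv_apply_eq_sum_hessAt {d : ℕ} {g : (Fin d → ℝ) → ℝ} {z : Fin d → ℝ}
    (hg : DifferentiableAt ℝ (fderiv ℝ g) z) (v : Fin d → ℝ) :
    fderiv ℝ (fderiv ℝ g) z v v = ∑ i, ∑ j, v i * hessAt g z i j * v j := by
  have hh : ∀ i j, hessAt g z i j
      = fderiv ℝ (fderiv ℝ g) z (Pi.single i 1) (Pi.single j 1) := by
    intro i j
    have := (hg.hasFDerivAt.clm_apply (hasFDerivAt_const (Pi.single j (1 : ℝ)) z)).fderiv
    rw [hessAt, this]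
    simp
  have hv : v = ∑ i, v i • (Pi.single i 1 : Fin d → ℝ) := pi_eq_sum_univ' v
  conv_lhs => rw [hv]
  simp only [map_sum, map_smul, sum_apply, smul_apply,
    smul_eq_mul, hh, Finset.mul_sum]
  rw [Finset.sum_comm]
  refine Finset.sum_congr rfl fun i _ => Finset.sum_congr rfl fun j _ => ?_
  ring

/-- non-uniform diagonal shift: let `L ≤ U` be symmetric entrywise interval
bounds, `d⃗ > 0`, and `αᵢ ≥ max {0, −½ (Lᵢᵢ − Σ_{j≠i} max {|Lᵢⱼ|, |Uᵢⱼ|} d⃗ⱼ/d⃗ᵢ)}`.  Then for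
every symmetric `H` with `L ≤ H ≤ U` entrywise, `H + 2·diag(α)` is positive semidefinite
(`xᵀHx + 2 Σᵢ αᵢ xᵢ² ≥ 0` for all `x`); consequently, if `L, U` are entrywise bounds on the
Hessian of a twice continuously differentiable `g` over a box `[l, u]`, then the non-uniformly
shifted function `g_α(z) = g(z) + Σᵢ αᵢ (zᵢ − lᵢ)(zᵢ − uᵢ)` is convex on `[l, u]`. -/
theorem nonuniform_diagonal_shift_convexifies (d : ℕ) (L U : Matrix (Fin d) (Fin d) ℝ)
    (hLs : L.IsSymm) (hUs : U.IsSymm) (hLU : ∀ i j, L i j ≤ U i j)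
    (dv : Fin d → ℝ) (hdv : ∀ i, 0 < dv i) (α : Fin d → ℝ)
    (hα : ∀ i,
      max 0 (-(1 / 2) *
        (L i i - ∑ j ∈ Finset.univ.erase i, max |L i j| |U i j| * (dv j / dv i))) ≤ α i) :
    (∀ H : Matrix (Fin d) (Fin d) ℝ, H.IsSymm →
      (∀ i j, L i j ≤ H i j ∧ H i j ≤ U i j) →
      ∀ x : Fin d → ℝ, 0 ≤ (∑ i, ∑ j, x i * H i j * x j) + 2 * ∑ i, α i * (x i) ^ 2) ∧
    (∀ (g : (Fin d → ℝ) → ℝ) (l u : Fin d → ℝ),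
      (∃ s : Set (Fin d → ℝ), IsOpen s ∧ Set.Icc l u ⊆ s ∧ ContDiffOn ℝ 2 g s) →
      (∀ z ∈ Set.Icc l u, ∀ i j, L i j ≤ hessAt g z i j ∧ hessAt g z i j ≤ U i j) →
      ConvexOn ℝ (Set.Icc l u) (fun z => g z + ∑ i, α i * (z i - l i) * (z i - u i))) := by
  refine ⟨fun H _ hH x => scaled_gershgorin hLs hUs hdv hα H hH x, ?_⟩
  rintro g l u ⟨s, hs, hsub, hg⟩ hhess
  refine ⟨convex_Icc l u, ?_⟩
  intro x hx y hy a b ha hb hab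
  set v : Fin d → ℝ := y - x with hv
  let p : ℝ → Fin d → ℝ := fun t => x + t • v
  have hp : ∀ t ∈ Set.Icc (0 : ℝ) 1, p t ∈ Set.Icc l u := fun t ht =>
    (convex_Icc l u).add_smul_sub_mem hx hy ht
  have hpd : ∀ t, HasDerivAt p v t := by
    intro t
    have h := ((hasDerivAt_id t).smul_const v).const_add x
    rw [one_smul] at h
    exact h
  have hpi : ∀ t i, HasDerivAt (fun t => p t i) (v i) t := fun t i =>
    (hasDerivAt_pi.1 (hpd t)) i
  have hcd : ∀ t ∈ Set.Icc (0 : ℝ) 1, ContDiffAt ℝ 2 g (p t) := fun t ht =>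
    hg.contDiffAt (hs.mem_nhds (hsub (hp t ht)))
  have hd2 : ∀ t ∈ Set.Icc (0 : ℝ) 1, DifferentiableAt ℝ (fderiv ℝ g) (p t) := fun t ht =>
    ((hcd t ht).fderiv_right (m := 1) (by norm_num)).differentiableAt (by norm_num)
  let φ : ℝ → ℝ := fun t => g (p t) + ∑ i, α i * (p t i - l i) * (p t i - u i)
  let φ' : ℝ → ℝ := fun t =>
    fderiv ℝ g (p t) v + ∑ i, α i * v i * ((p t i - l i) + (p t i - u i))
  let φ'' : ℝ → ℝ := fun t =>
    fderiv ℝ (fderiv ℝ g) (p t) v v + ∑ i, α i * v i * (v i + v i)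
  have h1 : ∀ t ∈ Set.Icc (0 : ℝ) 1, HasDerivAt φ (φ' t) t := by
    intro t ht
    refine HasDerivAt.add ?_ ?_
    · exact ((hcd t ht).differentiableAt (by norm_num)).hasFDerivAt.comp_hasDerivAt t (hpd t)
    · refine HasDerivAt.fun_sum fun i _ => ?_
      exact ((((hpi t i).sub_const (l i)).const_mul (α i)).mul
        ((hpi t i).sub_const (u i))).congr_deriv (by ring)
  have h2 : ∀ t ∈ Set.Icc (0 : ℝ) 1, HasDerivAt φ' (φ'' t) t := by
    intro t ht
    refine HasDerivAt.add ?_ ?_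
    · have := ((hd2 t ht).hasFDerivAt.comp_hasDerivAt t (hpd t)).clm_apply (hasDerivAt_const t v)
      simpa using this
    · exact HasDerivAt.fun_sum fun i _ =>
        (((hpi t i).sub_const (l i)).add ((hpi t i).sub_const (u i))).const_mul (α i * v i)
  have h3 : ∀ t ∈ Set.Icc (0 : ℝ) 1, 0 ≤ φ'' t := by
    intro t ht
    have := scaled_gershgorin hLs hUs hdv hα (hessAt g (p t)) (hhess _ (hp t ht)) v
    rw [← fderiv_fderiv_apply_eq_sum_hessAt (hd2 t ht), Finset.mul_sum] at this
    refine this.trans_eq ?_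
    simp only [φ'']
    congr 1
    exact Finset.sum_congr rfl fun i _ => by ring
  have hφ : ConvexOn ℝ (Set.Icc (0 : ℝ) 1) φ :=
    convexOn_of_hasDerivWithinAt2_nonneg (convex_Icc 0 1)
      (fun t ht => (h1 t ht).continuousAt.continuousWithinAt)
      (fun t ht => (h1 t (interior_subset ht)).hasDerivWithinAt)
      (fun t ht => (h2 t (interior_subset ht)).hasDerivWithinAt)
      (fun t ht => h3 t (interior_subset ht))
  have key := hφ.2 (Set.left_mem_Icc.2 zero_le_one) (Set.right_mem_Icc.2 zero_le_one) ha hb hab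
  have e0 : p 0 = x := by simp [p]
  have e1 : p 1 = y := by simp [p, hv]
  have eb : p (a • 0 + b • 1) = a • x + b • y := by
    obtain rfl : a = 1 - b := by linarith
    simp only [p, hv, smul_eq_mul, mul_one]
    module
  simpa only [φ, e0, e1, eb] using key
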